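/- Let n ≥ 1, 0 < p ≤ 1, and let f be a smooth nonnegative function on ℝⁿ × (0,1] satisfying ∂ₜ f ≤ Δ f pointwise, such that ‖f‖_{Lᵖ(B(0,r)×[0,1])} ≤ e^{C r} for all r > 0 and some constant C > 0. Then there exist constants C' > 0 and a > 0, with a depending only on n and p, such that f(x,t) ≤ e^{C'(|x|+1)} / tᵃ for all (x,t) ∈ ℝⁿ × (0,1]. -/

import Mathlib

open MeasureTheory Filter Set Metric

/-- The Euclidean Laplacian of `g : ℝⁿ → ℝ`. -/
noncomputable def heatLap {n : ℕ} (g : EuclideanSpace ℝ (Fin n) → ℝ)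
    (x : EuclideanSpace ℝ (Fin n)) : ℝ :=
  ∑ i : Fin n, fderiv ℝ (fun y => fderiv ℝ g y (EuclideanSpace.single i (1 : ℝ))) x
    (EuclideanSpace.single i (1 : ℝ))

/-!
Integrating `∂ₜ f ≤ Δ f` against a backward heat kernel with pole near `(t₀, x₀)`, cut off to the
parabolic cylinder of radius `r` below `(t₀, x₀)`, bounds `f(t₀, x₀)` by the integral of `f` times
the amount by which the cut-off kernel fails to solve the backward heat equation. That defect lives
where `τ + |y - x₀|² ≥ r²/2`, with `τ` the time to the pole; there the Gaussian controls it by a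
constant multiple of `r^-(n+2)`. This is the `L¹` mean value inequality.

For `p ≤ 1` the `Lᵖ` version follows by maximising `f d^((n+2)/p)` over the cylinder, where `d` is
the parabolic distance to the boundary. On the cylinder of radius `d/2` below a maximum point `z`,
`f` is at most `2^((n+2)/p) f(z)`, so the `L¹` inequality gives `f(z) ≲ d^-(n+2) f(z)^(1-p) ∫ fᵖ`.

On the cylinder of radius `√(t/2)` below `(t, x)` this yields the exponent `a = (n+2)/(2p)`
for `t < 1`, and the time `t = 1` is reached by continuity.
-/

open Function (uncurry)
open scoped Topology

section TimeSlices

variable {E : Type*} [NormedAddCommGroup E] [NormedSpace ℝ E]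
  {F : Type*} [NormedAddCommGroup F] [NormedSpace ℝ F] {u : ℝ → E → F} {T : Set ℝ}

lemma contDiff_slice {k : WithTop ℕ∞} (hu : ContDiffOn ℝ k (uncurry u) (T ×ˢ univ)) {t : ℝ}
    (ht : t ∈ T) : ContDiff ℝ k (u t) := by
  rw [← contDiffOn_univ]
  exact hu.comp (f := fun y => (t, y)) (by fun_prop) fun y _ => ⟨ht, mem_univ y⟩

lemma hasDerivAt_slice (hT : IsOpen T) (hu : ContDiffOn ℝ 1 (uncurry u) (T ×ˢ univ)) {t : ℝ}
    (ht : t ∈ T) (y : E) :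
    HasDerivAt (fun s => u s y) (fderiv ℝ (uncurry u) (t, y) (1, 0)) t := by
  have hdiff : DifferentiableAt ℝ (uncurry u) (t, y) :=
    (hu.contDiffAt ((hT.prod isOpen_univ).mem_nhds ⟨ht, mem_univ y⟩)).differentiableAt one_ne_zero
  exact hdiff.hasFDerivAt.comp_hasDerivAt t ((hasDerivAt_id t).prodMk (hasDerivAt_const t y))

lemma continuousOn_deriv_slice (hT : IsOpen T) (hu : ContDiffOn ℝ 1 (uncurry u) (T ×ˢ univ)) :
    ContinuousOn (uncurry fun t y => deriv (fun s => u s y) t) (T ×ˢ univ) :=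
  ((hu.continuousOn_fderiv_of_isOpen (hT.prod isOpen_univ) le_rfl).clm_apply
    continuousOn_const).congr fun z hz => (hasDerivAt_slice hT hu hz.1 z.2).deriv

lemma setIntegral_sub_eq_integral_integral_deriv [CompleteSpace F] [SecondCountableTopology E]
    [MeasurableSpace E] [BorelSpace E] {μ : Measure E} [IsFiniteMeasureOnCompacts μ] [SFinite μ]
    (hT : IsOpen T) (hu : ContDiffOn ℝ 1 (uncurry u) (T ×ˢ univ)) {a b : ℝ} (hab : a ≤ b)
    (habT : Icc a b ⊆ T) {P : Set E} (hP : IsCompact P) :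
    ∫ y in P, (u b y - u a y) ∂μ = ∫ s in Icc a b, ∫ y in P, deriv (fun s => u s y) s ∂μ := by
  have hcont := continuousOn_deriv_slice hT hu
  have hint : Integrable (uncurry fun s y => deriv (fun s => u s y) s)
      ((volume.restrict (Icc a b)).prod (μ.restrict P)) := by
    rw [Measure.prod_restrict]
    exact (hcont.mono (prod_mono habT (subset_univ P))).integrableOn_compact
      (isCompact_Icc.prod hP)
  rw [integral_integral_swap hint]
  refine setIntegral_congr_fun hP.measurableSet fun y _ => ?_
  have hderiv : ∀ s ∈ uIcc a b, HasDerivAt (fun s => u s y) (deriv (fun s => u s y) s) s :=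
    fun s hs => (hasDerivAt_slice hT hu (habT (by rwa [uIcc_of_le hab] at hs))
      y).differentiableAt.hasDerivAt
  have hcont_y : ContinuousOn (fun s => deriv (fun s => u s y) s) (Icc a b) :=
    hcont.comp (f := fun s => (s, y)) (by fun_prop) fun s hs => ⟨habT hs, mem_univ y⟩
  rw [integral_Icc_eq_integral_Ioc, ← intervalIntegral.integral_of_le hab,
    intervalIntegral.integral_eq_sub_of_hasDerivAt hderiv
      (hcont_y.intervalIntegrable_of_Icc hab)]

end TimeSlices

section Laplacian

variable {n : ℕ} {g h : EuclideanSpace ℝ (Fin n) → ℝ}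

lemma contDiff_fderiv_apply (hg : ContDiff ℝ 2 g) (e : EuclideanSpace ℝ (Fin n)) :
    ContDiff ℝ 1 fun y => fderiv ℝ g y e :=
  (hg.fderiv_right (by norm_num)).clm_apply contDiff_const

lemma continuous_heatLap (hg : ContDiff ℝ 2 g) : Continuous (heatLap g) :=
  continuous_finsetSum _ fun _ _ =>
    ((contDiff_fderiv_apply hg _).continuous_fderiv one_ne_zero).clm_apply continuous_const

lemma heatLap_eq_of_eventuallyEq {x : EuclideanSpace ℝ (Fin n)} (hgh : g =ᶠ[𝓝 x] h) :
    heatLap g x = heatLap h x := by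
  refine Finset.sum_congr rfl fun i _ => ?_
  have hfderiv : (fun y => fderiv ℝ g y (EuclideanSpace.single i (1 : ℝ))) =ᶠ[𝓝 x]
      fun y => fderiv ℝ h y (EuclideanSpace.single i (1 : ℝ)) :=
    (hgh.fderiv (𝕜 := ℝ)).mono fun y hy => by simp only [hy]
  rw [hfderiv.fderiv_eq]

lemma heatLap_eq_zero_of_notMem {P : Set (EuclideanSpace ℝ (Fin n))} (hP : IsClosed P)
    (hg : ∀ y ∉ P, g y = 0) {x : EuclideanSpace ℝ (Fin n)} (hx : x ∉ P) : heatLap g x = 0 := by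
  have hzero : g =ᶠ[𝓝 x] fun _ => 0 := by
    filter_upwards [hP.isOpen_compl.mem_nhds hx] with y hy using hg y hy
  rw [heatLap_eq_of_eventuallyEq hzero]
  simp [heatLap]

lemma integral_mul_heatLap_comm (hg : ContDiff ℝ 2 g) (hh : ContDiff ℝ 2 h)
    (hsupp : HasCompactSupport h) : ∫ y, heatLap g y * h y = ∫ y, g y * heatLap h y := by
  have integrable_mul : ∀ {v w : EuclideanSpace ℝ (Fin n) → ℝ}, Continuous v → Continuous w →
      HasCompactSupport w → Integrable fun y => v y * w y := fun hv hw hsupp =>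
    (hv.mul hw).integrable_of_hasCompactSupport hsupp.mul_left
  have by_parts : ∀ {v w : EuclideanSpace ℝ (Fin n) → ℝ} (e), ContDiff ℝ 1 v → ContDiff ℝ 1 w →
      HasCompactSupport w → ∫ y, v y * fderiv ℝ w y e = -∫ y, fderiv ℝ v y e * w y := by
    intro v w e hv hw hsupp
    have hv' := (hv.continuous_fderiv one_ne_zero).clm_apply (continuous_const (y := e))
    have hw' := (hw.continuous_fderiv one_ne_zero).clm_apply (continuous_const (y := e))
    exact integral_mul_fderiv_eq_neg_fderiv_mul_of_integrable
      (integrable_mul hv' hw.continuous hsupp)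
      (integrable_mul hv.continuous hw' (hsupp.fderiv_apply (𝕜 := ℝ) e))
      (integrable_mul hv.continuous hw.continuous hsupp)
      (fun x _ => hv.differentiable one_ne_zero x) (fun x _ => hw.differentiable one_ne_zero x)
  have continuous_second : ∀ {v : EuclideanSpace ℝ (Fin n) → ℝ} (e), ContDiff ℝ 2 v →
      Continuous fun y => fderiv ℝ (fun z => fderiv ℝ v z e) y e := fun e hv =>
    ((contDiff_fderiv_apply hv e).continuous_fderiv one_ne_zero).clm_apply continuous_const
  have hsupp' := fun e => hsupp.fderiv_apply (𝕜 := ℝ) e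
  simp only [heatLap, Finset.sum_mul, Finset.mul_sum]
  rw [integral_finsetSum _ fun i _ => integrable_mul (continuous_second _ hg) hh.continuous hsupp,
    integral_finsetSum _ fun i _ => integrable_mul hg.continuous (continuous_second _ hh)
      ((hsupp' _).fderiv_apply (𝕜 := ℝ) _)]
  refine Finset.sum_congr rfl fun i _ => ?_
  rw [by_parts _ (hg.of_le one_le_two) (contDiff_fderiv_apply hh _) (hsupp' _),
    by_parts _ (contDiff_fderiv_apply hg _) (hh.of_le one_le_two) hsupp, neg_neg]

lemma setIntegral_mul_heatLap_comm (hg : ContDiff ℝ 2 g) (hh : ContDiff ℝ 2 h)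
    {P : Set (EuclideanSpace ℝ (Fin n))} (hP : IsCompact P) (hzero : ∀ y ∉ P, h y = 0) :
    ∫ y in P, heatLap g y * h y = ∫ y in P, g y * heatLap h y := by
  rw [setIntegral_eq_integral_of_forall_compl_eq_zero fun y hy => by rw [hzero y hy, mul_zero],
    setIntegral_eq_integral_of_forall_compl_eq_zero fun y hy => by
      rw [heatLap_eq_zero_of_notMem hP.isClosed hzero hy, mul_zero]]
  exact integral_mul_heatLap_comm hg hh (HasCompactSupport.intro hP hzero)

variable {w w' w'' : ℝ → ℝ}

lemma hasFDerivAt_radial (hw : ∀ q, HasDerivAt w (w' q) q) (x y : EuclideanSpace ℝ (Fin n)) :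
    HasFDerivAt (fun z => w (‖z - x‖ ^ 2)) (w' (‖y - x‖ ^ 2) • (2 • innerSL ℝ (y - x))) y := by
  have hsq : HasFDerivAt (fun z => ‖z - x‖ ^ 2) (2 • innerSL ℝ (y - x)) y := by
    simpa using ((hasFDerivAt_id y).sub_const x).norm_sq
  exact (hw _).comp_hasFDerivAt y hsq

lemma heatLap_radial (hw : ∀ q, HasDerivAt w (w' q) q) (hw' : ∀ q, HasDerivAt w' (w'' q) q)
    (x y : EuclideanSpace ℝ (Fin n)) :
    heatLap (fun z => w (‖z - x‖ ^ 2)) y =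
      2 * n * w' (‖y - x‖ ^ 2) + 4 * ‖y - x‖ ^ 2 * w'' (‖y - x‖ ^ 2) := by
  have first : ∀ i : Fin n, (fun y => fderiv ℝ (fun z => w (‖z - x‖ ^ 2)) y
      (EuclideanSpace.single i (1 : ℝ))) = fun y => w' (‖y - x‖ ^ 2) * (2 * (y - x) i) := by
    intro i
    funext z
    rw [(hasFDerivAt_radial hw x z).fderiv]
    simp [EuclideanSpace.inner_single_right (𝕜 := ℝ)]
  have coord : ∀ i : Fin n, HasFDerivAt (fun y : EuclideanSpace ℝ (Fin n) => 2 * (y - x) i)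
      ((2 : ℝ) • (EuclideanSpace.proj i : EuclideanSpace ℝ (Fin n) →L[ℝ] ℝ)) y := fun i =>
    ((EuclideanSpace.proj (𝕜 := ℝ) i).hasFDerivAt.sub_const (x i)).const_mul (2 : ℝ)
  have second : ∀ i : Fin n,
      fderiv ℝ (fun y => fderiv ℝ (fun z => w (‖z - x‖ ^ 2)) y (EuclideanSpace.single i (1 : ℝ))) y
        (EuclideanSpace.single i (1 : ℝ)) =
      2 * w' (‖y - x‖ ^ 2) + 4 * w'' (‖y - x‖ ^ 2) * (y - x) i ^ 2 := by
    intro i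
    rw [first, HasFDerivAt.fderiv (f := fun y => w' (‖y - x‖ ^ 2) * (2 * (y - x) i))
      ((hasFDerivAt_radial hw' x y).mul (coord i))]
    simp [EuclideanSpace.inner_single_right (𝕜 := ℝ)]
    ring
  rw [heatLap, Finset.sum_congr rfl fun i _ => second i, Finset.sum_add_distrib,
    Finset.sum_const, Finset.card_univ, Fintype.card_fin, nsmul_eq_mul, ← Finset.mul_sum,
    ← EuclideanSpace.real_norm_sq_eq]
  ring

end Laplacian

section Subsolution

variable {n : ℕ}

/-- `f` is a nonnegative `C²` subsolution of the heat equation, `∂ₜ f ≤ Δ f`, at the times in `T`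
and on all of `ℝⁿ`. -/
structure IsNonnegHeatSubsolution (f : ℝ → EuclideanSpace ℝ (Fin n) → ℝ) (T : Set ℝ) : Prop where
  contDiffOn : ContDiffOn ℝ 2 (uncurry f) (T ×ˢ univ)
  nonneg : ∀ t ∈ T, ∀ x, 0 ≤ f t x
  deriv_le_heatLap : ∀ t ∈ T, ∀ x, deriv (fun s => f s x) t ≤ heatLap (f t) x

namespace IsNonnegHeatSubsolution

variable {f φ : ℝ → EuclideanSpace ℝ (Fin n) → ℝ} {T : Set ℝ}

lemma mono (hf : IsNonnegHeatSubsolution f T) {S : Set ℝ} (hST : S ⊆ T) :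
    IsNonnegHeatSubsolution f S where
  contDiffOn := hf.contDiffOn.mono (prod_mono hST Subset.rfl)
  nonneg t ht := hf.nonneg t (hST ht)
  deriv_le_heatLap t ht := hf.deriv_le_heatLap t (hST ht)

variable {P : Set (EuclideanSpace ℝ (Fin n))} {a b B : ℝ}

lemma setIntegral_deriv_mul_le (hf : IsNonnegHeatSubsolution f T) (hT : IsOpen T)
    (hφ : ContDiffOn ℝ 2 (uncurry φ) (T ×ˢ univ)) {s : ℝ} (hs : s ∈ T) (hφ0 : ∀ y, 0 ≤ φ s y)
    (hP : IsCompact P) (hsupp : ∀ y ∉ P, φ s y = 0)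
    (hB : ∀ y ∈ P, deriv (fun s => φ s y) s + heatLap (φ s) y ≤ B) :
    ∫ y in P, deriv (fun s => f s y * φ s y) s ≤ B * ∫ y in P, f s y := by
  have hfs := contDiff_slice hf.contDiffOn hs
  have hφs := contDiff_slice hφ hs
  have hf1 := hf.contDiffOn.of_le one_le_two
  have hφ1 := hφ.of_le one_le_two
  have integrable : ∀ {g : EuclideanSpace ℝ (Fin n) → ℝ}, Continuous g → IntegrableOn g P :=
    fun hg => hg.continuousOn.integrableOn_compact hP
  have hderiv_cont : Continuous fun y => deriv (fun s => f s y * φ s y) s := by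
    rw [← continuousOn_univ]
    exact (continuousOn_deriv_slice (u := fun s y => f s y * φ s y) hT (hf1.mul hφ1)).comp
      (f := fun y => (s, y)) (by fun_prop) fun y _ => ⟨hs, mem_univ y⟩
  have hΔf : IntegrableOn (fun y => heatLap (f s) y * φ s y) P :=
    integrable ((continuous_heatLap hfs).mul hφs.continuous)
  have hΔφ : IntegrableOn (fun y => f s y * heatLap (φ s) y) P :=
    integrable (hfs.continuous.mul (continuous_heatLap hφs))
  have hdiff : IntegrableOn (fun y => heatLap (f s) y * φ s y - f s y * heatLap (φ s) y) P :=
    hΔf.sub hΔφ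
  have hBf : IntegrableOn (fun y => B * f s y) P := integrable (hfs.continuous.const_mul B)
  have hpointwise : ∀ y ∈ P, deriv (fun s => f s y * φ s y) s ≤
      heatLap (f s) y * φ s y - f s y * heatLap (φ s) y + B * f s y := by
    intro y hy
    have hprod : deriv (fun s => f s y * φ s y) s =
        deriv (fun s => f s y) s * φ s y + f s y * deriv (fun s => φ s y) s :=
      deriv_fun_mul (hasDerivAt_slice hT hf1 hs y).differentiableAt
        (hasDerivAt_slice hT hφ1 hs y).differentiableAt
    have hsub := mul_le_mul_of_nonneg_right (hf.deriv_le_heatLap s hs y) (hφ0 y)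
    have hdefect := mul_le_mul_of_nonneg_left (hB y hy) (hf.nonneg s hs y)
    rw [hprod]
    linarith
  calc ∫ y in P, deriv (fun s => f s y * φ s y) s
      ≤ ∫ y in P, (heatLap (f s) y * φ s y - f s y * heatLap (φ s) y + B * f s y) :=
        setIntegral_mono_on (integrable hderiv_cont) (hdiff.add hBf) hP.measurableSet hpointwise
    _ = B * ∫ y in P, f s y := by
        rw [integral_add hdiff hBf, integral_sub hΔf hΔφ,
          setIntegral_mul_heatLap_comm hfs hφs hP hsupp, sub_self, zero_add, integral_const_mul]

lemma setIntegral_mul_le (hf : IsNonnegHeatSubsolution f T) (hT : IsOpen T)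
    (hφ : ContDiffOn ℝ 2 (uncurry φ) (T ×ˢ univ)) (hab : a ≤ b) (habT : Icc a b ⊆ T)
    (hφ0 : ∀ s ∈ Icc a b, ∀ y, 0 ≤ φ s y) (hP : IsCompact P)
    (hsupp : ∀ s ∈ Icc a b, ∀ y ∉ P, φ s y = 0) (hφa : ∀ y, φ a y = 0)
    (hB : ∀ s ∈ Icc a b, ∀ y ∈ P, deriv (fun s => φ s y) s + heatLap (φ s) y ≤ B) :
    ∫ y in P, f b y * φ b y ≤ B * ∫ z in Icc a b ×ˢ P, uncurry f z := by
  have hcompact : IsCompact (Icc a b ×ˢ P) := isCompact_Icc.prod hP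
  have hfφ : ContDiffOn ℝ 1 (uncurry fun s y => f s y * φ s y) (T ×ˢ univ) :=
    (hf.contDiffOn.mul hφ).of_le one_le_two
  have hsubset : Icc a b ×ˢ P ⊆ T ×ˢ univ := prod_mono habT (subset_univ P)
  have hint : IntegrableOn (uncurry f) (Icc a b ×ˢ P) :=
    (hf.contDiffOn.continuousOn.mono hsubset).integrableOn_compact hcompact
  have hint' : IntegrableOn (uncurry fun s y => deriv (fun s => f s y * φ s y) s)
      (Icc a b ×ˢ P) :=
    ((continuousOn_deriv_slice hT hfφ).mono hsubset).integrableOn_compact hcompact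
  rw [IntegrableOn, Measure.volume_eq_prod, ← Measure.prod_restrict] at hint hint'
  calc ∫ y in P, f b y * φ b y
      = ∫ y in P, (f b y * φ b y - f a y * φ a y) := by simp only [hφa, mul_zero, sub_zero]
    _ = ∫ s in Icc a b, ∫ y in P, deriv (fun s => f s y * φ s y) s :=
        setIntegral_sub_eq_integral_integral_deriv hT hfφ hab habT hP
    _ ≤ ∫ s in Icc a b, B * ∫ y in P, f s y :=
        setIntegral_mono_on hint'.integral_prod_left (hint.integral_prod_left.const_mul B)
          measurableSet_Icc fun s hs => hf.setIntegral_deriv_mul_le hT hφ (habT hs) (hφ0 s hs)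
            hP (hsupp s hs) (hB s hs)
    _ = B * ∫ z in Icc a b ×ˢ P, uncurry f z := by
        rw [integral_const_mul, Measure.volume_eq_prod, ← Measure.prod_restrict,
          integral_prod _ hint]
        rfl

end IsNonnegHeatSubsolution

end Subsolution

section HeatKernel

/-- The Euclidean heat kernel `(4πτ)^(-n/2) e^(-q/(4τ))` in dimension `n`, as a function of the
time `τ` and of the *squared* distance `q`. -/
noncomputable def heatKernel (n : ℕ) (τ q : ℝ) : ℝ :=
  (4 * Real.pi * τ) ^ (-(n / 2 : ℝ)) * Real.exp (-q / (4 * τ))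

variable {n : ℕ} {τ : ℝ}

lemma heatKernel_pos (hτ : 0 < τ) (q : ℝ) : 0 < heatKernel n τ q := by
  unfold heatKernel
  positivity

lemma contDiffAt_heatKernel {k : WithTop ℕ∞} {z : ℝ × ℝ} (hz : 0 < z.1) :
    ContDiffAt ℝ k (uncurry (heatKernel n)) z := by
  have hpos : 4 * Real.pi * z.1 ≠ 0 := by positivity
  have hexponent : ContDiffAt ℝ k (fun z : ℝ × ℝ => -z.2 / (4 * z.1)) z :=
    contDiffAt_snd.neg.div (contDiffAt_const.mul contDiffAt_fst) (by positivity)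
  exact ((contDiffAt_const.mul contDiffAt_fst).rpow_const_of_ne hpos).mul hexponent.exp

lemma hasDerivAt_heatKernel_sqDist (q : ℝ) :
    HasDerivAt (heatKernel n τ) (-(1 / (4 * τ)) * heatKernel n τ q) q := by
  have hexp := ((hasDerivAt_neg q).div_const (4 * τ)).exp
  refine (hexp.const_mul ((4 * Real.pi * τ) ^ (-(n / 2 : ℝ)))).congr_deriv ?_
  rw [heatKernel]
  ring

lemma hasDerivAt_heatKernel_time (hτ : 0 < τ) (q : ℝ) :
    HasDerivAt (fun τ => heatKernel n τ q)
      ((-(n / (2 * τ)) + q / (4 * τ ^ 2)) * heatKernel n τ q) τ := by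
  have hlin : HasDerivAt (fun τ : ℝ => 4 * Real.pi * τ) (4 * Real.pi) τ := by
    simpa using (hasDerivAt_id τ).const_mul (4 * Real.pi)
  have hpow := hlin.rpow_const (p := -(n / 2 : ℝ)) (Or.inl (by positivity))
  have hexp : HasDerivAt (fun τ => Real.exp (-q / (4 * τ)))
      (Real.exp (-q / (4 * τ)) * (q / (4 * τ ^ 2))) τ := by
    refine ((hasDerivAt_const τ (-q)).fun_div ((hasDerivAt_id' τ).const_mul 4)
      (by positivity)).exp.congr_deriv ?_
    field_simp
    ring
  refine (hpow.mul hexp).congr_deriv ?_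
  rw [heatKernel, Real.rpow_sub_one (by positivity)]
  field_simp

lemma one_add_rpow_le {s x : ℝ} (hs : 1 ≤ s) (hx : 0 ≤ x) :
    (1 + x) ^ s ≤ (4 * s) ^ s * Real.exp (x / 4) := by
  have hs0 : 0 < s := by linarith
  have hbase : 1 + x ≤ 4 * s * Real.exp (x / (4 * s)) := by
    have hexp := mul_le_mul_of_nonneg_left (Real.add_one_le_exp (x / (4 * s)))
      (show 0 ≤ 4 * s by positivity)
    rw [mul_add, mul_div_cancel₀ x (mul_pos four_pos hs0).ne'] at hexp
    linarith
  calc (1 + x) ^ s ≤ (4 * s * Real.exp (x / (4 * s))) ^ s := by gcongr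
    _ = (4 * s) ^ s * Real.exp (x / 4) := by
        rw [Real.mul_rpow (by positivity) (Real.exp_pos _).le, ← Real.exp_mul]
        congr 2
        field_simp

lemma one_add_div_mul_heatKernel_le (hτ : 0 < τ) {q : ℝ} (hq : 0 ≤ q) :
    (1 + q / τ) * heatKernel n τ q ≤
      (2 * n + 4) ^ (n / 2 + 1 : ℝ) * (τ + q) ^ (-(n / 2 : ℝ)) := by
  have hx : 0 ≤ q / τ := by positivity
  have hx1 : 0 < 1 + q / τ := by positivity
  have hpi : (4 * Real.pi * τ) ^ (-(n / 2 : ℝ)) ≤ τ ^ (-(n / 2 : ℝ)) :=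
    Real.rpow_le_rpow_of_nonpos hτ (by nlinarith [Real.pi_gt_three])
      (neg_nonpos.mpr (by positivity))
  have hgauss : (1 + q / τ) ^ (n / 2 + 1 : ℝ) * Real.exp (-q / (4 * τ)) ≤
      (2 * n + 4) ^ (n / 2 + 1 : ℝ) := by
    have h := mul_le_mul_of_nonneg_right
      (one_add_rpow_le (s := n / 2 + 1) (le_add_of_nonneg_left (by positivity)) hx)
      (Real.exp_pos (-q / (4 * τ))).le
    rwa [mul_assoc, ← Real.exp_add, show q / τ / 4 + -q / (4 * τ) = 0 by field_simp; ring,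
      Real.exp_zero, mul_one, show 4 * (n / 2 + 1 : ℝ) = 2 * n + 4 by ring] at h
  calc (1 + q / τ) * heatKernel n τ q
      ≤ (1 + q / τ) * (τ ^ (-(n / 2 : ℝ)) * Real.exp (-q / (4 * τ))) := by
        unfold heatKernel
        gcongr
    _ = (1 + q / τ) ^ (n / 2 + 1 : ℝ) * Real.exp (-q / (4 * τ)) *
          (τ * (1 + q / τ)) ^ (-(n / 2 : ℝ)) := by
        rw [Real.mul_rpow hτ.le hx1.le, Real.rpow_add_one hx1.ne', Real.rpow_neg hx1.le]
        field_simp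
    _ ≤ (2 * n + 4) ^ (n / 2 + 1 : ℝ) * (τ + q) ^ (-(n / 2 : ℝ)) := by
        rw [mul_one_add, mul_div_cancel₀ q hτ.ne']
        gcongr

lemma one_add_div_mul_heatKernel_le_div_pow (hτ : 0 < τ) {q r : ℝ} (hq : 0 ≤ q) (hr : 0 < r)
    (hfar : r ^ 2 / 2 ≤ τ + q) :
    (1 + q / τ) * heatKernel n τ q ≤
      (2 * n + 4) ^ (n / 2 + 1 : ℝ) * 2 ^ (n / 2 : ℝ) / r ^ n := by
  calc (1 + q / τ) * heatKernel n τ q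
      ≤ (2 * n + 4) ^ (n / 2 + 1 : ℝ) * (τ + q) ^ (-(n / 2 : ℝ)) :=
        one_add_div_mul_heatKernel_le hτ hq
    _ ≤ (2 * n + 4) ^ (n / 2 + 1 : ℝ) * (r ^ 2 / 2) ^ (-(n / 2 : ℝ)) := by
        gcongr _ * ?_
        exact Real.rpow_le_rpow_of_nonpos (by positivity) hfar (neg_nonpos.mpr (by positivity))
    _ = (2 * n + 4) ^ (n / 2 + 1 : ℝ) * 2 ^ (n / 2 : ℝ) / r ^ n := by
        rw [Real.rpow_neg (by positivity), ← Real.inv_rpow (by positivity), inv_div,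
          Real.div_rpow zero_le_two (by positivity), ← Real.rpow_natCast_mul hr.le, Nat.cast_ofNat,
          mul_div_cancel₀ (n : ℝ) two_ne_zero, Real.rpow_natCast, mul_div_assoc]

lemma heatKernel_eq_pow_mul {ε : ℝ} (hε : 0 < ε) (q : ℝ) :
    heatKernel n ε q = (√ε)⁻¹ ^ n * heatKernel n 1 ((√ε)⁻¹ ^ 2 * q) := by
  have hpow : (√ε)⁻¹ ^ n = ε ^ (-(n / 2 : ℝ)) := by
    rw [Real.rpow_neg hε.le, inv_pow, Real.sqrt_eq_rpow, ← Real.rpow_mul_natCast hε.le]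
    ring_nf
  rw [hpow, inv_pow, Real.sq_sqrt hε.le, heatKernel, heatKernel,
    Real.mul_rpow (by positivity) hε.le, mul_one]
  field_simp

lemma integral_heatKernel_one :
    ∫ y : EuclideanSpace ℝ (Fin n), heatKernel n 1 (‖y‖ ^ 2) = 1 := by
  have hexp : ∀ y : EuclideanSpace ℝ (Fin n), heatKernel n 1 (‖y‖ ^ 2) =
      (4 * Real.pi) ^ (-(n / 2 : ℝ)) * Real.exp (-(1 / 4) * ‖y‖ ^ 2) := fun y => by
    rw [heatKernel]
    ring_nf
  simp only [hexp]
  rw [integral_const_mul, GaussianFourier.integral_rexp_neg_mul_sq_norm (by positivity),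
    finrank_euclideanSpace, Fintype.card_fin, show Real.pi / (1 / 4) = 4 * Real.pi by ring,
    ← Real.rpow_add (by positivity), neg_add_cancel, Real.rpow_zero]

lemma tendsto_norm_pow_mul_heatKernel_one :
    Tendsto (fun y : EuclideanSpace ℝ (Fin n) => ‖y‖ ^ n * heatKernel n 1 (‖y‖ ^ 2))
      (Bornology.cobounded _) (𝓝 0) := by
  have hsq : Tendsto (fun y : EuclideanSpace ℝ (Fin n) => ‖y‖ ^ 2) (Bornology.cobounded _) atTop :=
    (tendsto_pow_atTop two_ne_zero).comp tendsto_norm_cobounded_atTop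
  have h := ((tendsto_rpow_mul_exp_neg_mul_atTop_nhds_zero (n / 2 : ℝ) (1 / 4)
    (by norm_num)).comp hsq).const_mul ((4 * Real.pi) ^ (-(n / 2 : ℝ)))
  rw [mul_zero] at h
  refine h.congr fun y => ?_
  have hnorm : (‖y‖ ^ 2) ^ (n / 2 : ℝ) = ‖y‖ ^ n := by
    rw [← Real.rpow_natCast_mul (norm_nonneg y), Nat.cast_ofNat,
      mul_div_cancel₀ (n : ℝ) two_ne_zero, Real.rpow_natCast]
  simp only [Function.comp_apply, hnorm, heatKernel]
  ring_nf

lemma tendsto_integral_heatKernel_mul {u : EuclideanSpace ℝ (Fin n) → ℝ} (hu : Integrable u)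
    {x : EuclideanSpace ℝ (Fin n)} (hx : ContinuousAt u x) :
    Tendsto (fun ε => ∫ y, heatKernel n ε (‖y - x‖ ^ 2) * u y) (𝓝[>] 0) (𝓝 (u x)) := by
  have hscale : Tendsto (fun ε : ℝ => (√ε)⁻¹) (𝓝[>] 0) atTop := by
    refine tendsto_inv_nhdsGT_zero.comp (tendsto_nhdsWithin_iff.mpr ⟨?_, ?_⟩)
    · simpa using (Real.continuous_sqrt.tendsto 0).mono_left nhdsWithin_le_nhds
    · filter_upwards [self_mem_nhdsWithin] with ε hε using Real.sqrt_pos.mpr hε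
  have hconv := (tendsto_integral_comp_smul_smul_of_integrable'
    (φ := fun y => heatKernel n 1 (‖y‖ ^ 2)) (fun y => (heatKernel_pos one_pos _).le)
    integral_heatKernel_one (by simpa using tendsto_norm_pow_mul_heatKernel_one) hu hx).comp hscale
  refine hconv.congr' ?_
  filter_upwards [self_mem_nhdsWithin] with ε hε
  refine integral_congr_ae (Eventually.of_forall fun y => ?_)
  simp only [finrank_euclideanSpace, Fintype.card_fin, smul_eq_mul, norm_smul, norm_inv,
    Real.norm_of_nonneg (Real.sqrt_nonneg ε), mul_pow, heatKernel_eq_pow_mul hε, norm_sub_rev x y]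

lemma heatLap_mul_heatKernel {η η' η'' : ℝ → ℝ} (hη : ∀ q, HasDerivAt η (η' q) q)
    (hη' : ∀ q, HasDerivAt η' (η'' q) q) (x y : EuclideanSpace ℝ (Fin n)) :
    heatLap (fun z => η (‖z - x‖ ^ 2) * heatKernel n τ (‖z - x‖ ^ 2)) y =
      (2 * n * η' (‖y - x‖ ^ 2) + 4 * ‖y - x‖ ^ 2 * η'' (‖y - x‖ ^ 2) -
        2 * (‖y - x‖ ^ 2 / τ) * η' (‖y - x‖ ^ 2) +
        η (‖y - x‖ ^ 2) * (-(n / (2 * τ)) + ‖y - x‖ ^ 2 / (4 * τ ^ 2))) *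
        heatKernel n τ (‖y - x‖ ^ 2) := by
  have hfirst : ∀ q, HasDerivAt (fun q => η q * heatKernel n τ q)
      ((η' q - 1 / (4 * τ) * η q) * heatKernel n τ q) q := fun q => by
    refine ((hη q).mul (hasDerivAt_heatKernel_sqDist q)).congr_deriv ?_
    ring
  have hsecond : ∀ q, HasDerivAt (fun q => (η' q - 1 / (4 * τ) * η q) * heatKernel n τ q)
      ((η'' q - 1 / (2 * τ) * η' q + 1 / (16 * τ ^ 2) * η q) * heatKernel n τ q) q := fun q => by
    refine (((hη' q).fun_sub ((hη q).const_mul (1 / (4 * τ)))).mul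
      (hasDerivAt_heatKernel_sqDist q)).congr_deriv ?_
    ring
  rw [heatLap_radial hfirst hsecond]
  ring

end HeatKernel

section Cutoff

/-- A smooth cutoff on the line, equal to `1` on `(-∞, 1/2]` and to `0` on `[1, ∞)`. -/
noncomputable def lineCutoff (q : ℝ) : ℝ := Real.smoothTransition (2 - 2 * q)

lemma contDiff_lineCutoff {k : ℕ∞} : ContDiff ℝ k lineCutoff :=
  Real.smoothTransition.contDiff.comp (by fun_prop)

lemma lineCutoff_nonneg (q : ℝ) : 0 ≤ lineCutoff q := Real.smoothTransition.nonneg _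

lemma lineCutoff_le_one (q : ℝ) : lineCutoff q ≤ 1 := Real.smoothTransition.le_one _

lemma lineCutoff_of_one_le {q : ℝ} (hq : 1 ≤ q) : lineCutoff q = 0 :=
  Real.smoothTransition.zero_of_nonpos (by linarith)

lemma lineCutoff_of_le_half {q : ℝ} (hq : q ≤ 1 / 2) : lineCutoff q = 1 :=
  Real.smoothTransition.one_of_one_le (by linarith)

lemma contDiff_deriv_lineCutoff {k : ℕ} : ContDiff ℝ k (deriv lineCutoff) :=
  contDiff_lineCutoff.deriv' (n := k)

lemma hasDerivAt_lineCutoff (q : ℝ) : HasDerivAt lineCutoff (deriv lineCutoff q) q :=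
  (contDiff_lineCutoff.differentiable (n := 1) one_ne_zero q).hasDerivAt

lemma hasDerivAt_deriv_lineCutoff (q : ℝ) :
    HasDerivAt (deriv lineCutoff) (deriv (deriv lineCutoff) q) q :=
  (contDiff_deriv_lineCutoff.differentiable (n := 1) one_ne_zero q).hasDerivAt

lemma deriv_lineCutoff_of_lt_half {q : ℝ} (hq : q < 1 / 2) : deriv lineCutoff q = 0 := by
  have hone : lineCutoff =ᶠ[𝓝 q] fun _ => 1 := by
    filter_upwards [Iio_mem_nhds hq] with z hz using lineCutoff_of_le_half (le_of_lt hz)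
  rw [hone.deriv_eq, deriv_const]

lemma deriv_deriv_lineCutoff_of_lt_half {q : ℝ} (hq : q < 1 / 2) :
    deriv (deriv lineCutoff) q = 0 := by
  have hzero : deriv lineCutoff =ᶠ[𝓝 q] fun _ => 0 := by
    filter_upwards [Iio_mem_nhds hq] with z hz using deriv_lineCutoff_of_lt_half hz
  rw [hzero.deriv_eq, deriv_const]

lemma exists_abs_deriv_lineCutoff_le : ∃ M : ℝ, ∀ q ∈ Icc (0 : ℝ) 1,
    |deriv lineCutoff q| ≤ M ∧ |deriv (deriv lineCutoff) q| ≤ M := by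
  have hcont : Continuous fun q => (deriv lineCutoff q, deriv (deriv lineCutoff) q) :=
    (contDiff_deriv_lineCutoff (k := 0)).continuous.prodMk
      ((contDiff_deriv_lineCutoff (k := 1)).continuous_deriv le_rfl)
  obtain ⟨M, hM⟩ := isCompact_Icc.exists_bound_of_continuousOn (hcont.continuousOn (s := Icc 0 1))
  exact ⟨M, fun q hq => norm_prod_le_iff.mp (hM q hq)⟩

end Cutoff

section TruncatedHeatKernel

variable {n : ℕ} {x₀ : EuclideanSpace ℝ (Fin n)} {t₀ t r s : ℝ}

/-- The backward heat kernel with pole at `(t, x₀)`, cut off to the parabolic cylinder of radius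
`r` below `(t₀, x₀)`. It is the test function of the mean value inequality at `(t₀, x₀)`; the pole
is kept at a time `t > t₀` so that the function stays smooth up to `s = t₀`. -/
noncomputable def truncatedHeatKernel (x₀ : EuclideanSpace ℝ (Fin n)) (t₀ t r s : ℝ)
    (y : EuclideanSpace ℝ (Fin n)) : ℝ :=
  lineCutoff ((t₀ - s) / r ^ 2) *
    (lineCutoff (‖y - x₀‖ ^ 2 / r ^ 2) * heatKernel n (t - s) (‖y - x₀‖ ^ 2))

lemma contDiffOn_truncatedHeatKernel :
    ContDiffOn ℝ 2 (uncurry (truncatedHeatKernel x₀ t₀ t r)) (Iio t ×ˢ univ) := by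
  intro z hz
  have hcut : ContDiff ℝ 2 lineCutoff := contDiff_lineCutoff (k := 2)
  have hsq : ContDiff ℝ 2 fun z : ℝ × EuclideanSpace ℝ (Fin n) => ‖z.2 - x₀‖ ^ 2 :=
    (contDiff_snd.sub contDiff_const).norm_sq ℝ
  have hkernel : ContDiffAt ℝ 2 (fun z : ℝ × EuclideanSpace ℝ (Fin n) =>
      heatKernel n (t - z.1) (‖z.2 - x₀‖ ^ 2)) z :=
    (contDiffAt_heatKernel (n := n) (z := (t - z.1, ‖z.2 - x₀‖ ^ 2)) (sub_pos.mpr hz.1)).comp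
      (f := fun z => (t - z.1, ‖z.2 - x₀‖ ^ 2)) z
      ((contDiff_const.sub contDiff_fst).prodMk hsq).contDiffAt
  exact ((hcut.comp ((contDiff_const.sub contDiff_fst).div_const _)).contDiffAt.mul
    ((hcut.comp (hsq.div_const _)).contDiffAt.mul hkernel)).contDiffWithinAt

lemma truncatedHeatKernel_nonneg (hs : s < t) (y : EuclideanSpace ℝ (Fin n)) :
    0 ≤ truncatedHeatKernel x₀ t₀ t r s y :=
  mul_nonneg (lineCutoff_nonneg _)
    (mul_nonneg (lineCutoff_nonneg _) (heatKernel_pos (sub_pos.mpr hs) _).le)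

lemma truncatedHeatKernel_sub_sq (hr : r ≠ 0) (y : EuclideanSpace ℝ (Fin n)) :
    truncatedHeatKernel x₀ t₀ t r (t₀ - r ^ 2) y = 0 := by
  rw [truncatedHeatKernel, sub_sub_cancel, div_self (pow_ne_zero 2 hr),
    lineCutoff_of_one_le le_rfl, zero_mul]

lemma truncatedHeatKernel_self (y : EuclideanSpace ℝ (Fin n)) :
    truncatedHeatKernel x₀ t₀ t r t₀ y =
      lineCutoff (‖y - x₀‖ ^ 2 / r ^ 2) * heatKernel n (t - t₀) (‖y - x₀‖ ^ 2) := by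
  rw [truncatedHeatKernel, sub_self, zero_div, lineCutoff_of_le_half (by norm_num), one_mul]

lemma lineCutoff_sq_div_sq_of_notMem (hr : 0 < r) {y : EuclideanSpace ℝ (Fin n)}
    (hy : y ∉ closedBall x₀ r) : lineCutoff (‖y - x₀‖ ^ 2 / r ^ 2) = 0 := by
  rw [mem_closedBall_iff_norm, not_le] at hy
  refine lineCutoff_of_one_le ?_
  rw [one_le_div (by positivity)]
  gcongr

lemma truncatedHeatKernel_of_notMem (hr : 0 < r) {y : EuclideanSpace ℝ (Fin n)}
    (hy : y ∉ closedBall x₀ r) : truncatedHeatKernel x₀ t₀ t r s y = 0 := by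
  rw [truncatedHeatKernel, lineCutoff_sq_div_sq_of_notMem hr hy, zero_mul, mul_zero]

lemma deriv_add_heatLap_truncatedHeatKernel (hs : s < t) (y : EuclideanSpace ℝ (Fin n)) :
    deriv (fun s => truncatedHeatKernel x₀ t₀ t r s y) s +
        heatLap (truncatedHeatKernel x₀ t₀ t r s) y =
      (lineCutoff ((t₀ - s) / r ^ 2) *
          (2 * n * deriv lineCutoff (‖y - x₀‖ ^ 2 / r ^ 2) +
            4 * (‖y - x₀‖ ^ 2 / r ^ 2) * deriv (deriv lineCutoff) (‖y - x₀‖ ^ 2 / r ^ 2) -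
            2 * (‖y - x₀‖ ^ 2 / (t - s)) * deriv lineCutoff (‖y - x₀‖ ^ 2 / r ^ 2)) -
        deriv lineCutoff ((t₀ - s) / r ^ 2) * lineCutoff (‖y - x₀‖ ^ 2 / r ^ 2)) / r ^ 2 *
        heatKernel n (t - s) (‖y - x₀‖ ^ 2) := by
  set q := ‖y - x₀‖ ^ 2 with hq
  have htime : HasDerivAt (fun s => truncatedHeatKernel x₀ t₀ t r s y)
      (-(deriv lineCutoff ((t₀ - s) / r ^ 2) / r ^ 2) *
          (lineCutoff (q / r ^ 2) * heatKernel n (t - s) q) -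
        lineCutoff ((t₀ - s) / r ^ 2) * (lineCutoff (q / r ^ 2) *
          ((-(n / (2 * (t - s))) + q / (4 * (t - s) ^ 2)) * heatKernel n (t - s) q))) s := by
    have hcut := (hasDerivAt_lineCutoff ((t₀ - s) / r ^ 2)).comp s
      (((hasDerivAt_id' s).const_sub t₀).div_const (r ^ 2))
    have hkernel := (hasDerivAt_heatKernel_time (n := n) (sub_pos.mpr hs) q).comp s
      ((hasDerivAt_id' s).const_sub t)
    refine (hcut.mul (hkernel.const_mul (lineCutoff (q / r ^ 2)))).congr_deriv ?_
    simp only [Function.comp_apply]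
    ring
  have hfirst : ∀ q, HasDerivAt
      (fun q => lineCutoff ((t₀ - s) / r ^ 2) * lineCutoff (q / r ^ 2))
      (lineCutoff ((t₀ - s) / r ^ 2) * (deriv lineCutoff (q / r ^ 2) * (1 / r ^ 2))) q := fun q =>
    ((hasDerivAt_lineCutoff _).comp q ((hasDerivAt_id' q).div_const (r ^ 2))).const_mul _
  have hsecond : ∀ q, HasDerivAt
      (fun q => lineCutoff ((t₀ - s) / r ^ 2) * (deriv lineCutoff (q / r ^ 2) * (1 / r ^ 2)))
      (lineCutoff ((t₀ - s) / r ^ 2) *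
        (deriv (deriv lineCutoff) (q / r ^ 2) * (1 / r ^ 2) * (1 / r ^ 2))) q := fun q =>
    (((hasDerivAt_deriv_lineCutoff _).comp q
      ((hasDerivAt_id' q).div_const (r ^ 2))).mul_const (1 / r ^ 2)).const_mul _
  have hspace := heatLap_mul_heatKernel (τ := t - s) hfirst hsecond x₀ y
  simp only [mul_assoc (lineCutoff ((t₀ - s) / r ^ 2))] at hspace
  rw [htime.deriv]
  unfold truncatedHeatKernel
  rw [hspace, ← hq]
  ring

variable {M : ℝ}

lemma cutoff_defect_le (n : ℕ) (hM : ∀ q ∈ Icc (0 : ℝ) 1,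
      |deriv lineCutoff q| ≤ M ∧ |deriv (deriv lineCutoff) q| ≤ M)
    {σ ρ x : ℝ} (hσ : σ ∈ Icc 0 1) (hρ : ρ ∈ Icc 0 1) (hx : 0 ≤ x) :
    lineCutoff σ * (2 * n * deriv lineCutoff ρ + 4 * ρ * deriv (deriv lineCutoff) ρ -
        2 * x * deriv lineCutoff ρ) - deriv lineCutoff σ * lineCutoff ρ ≤
      (2 * n + 5) * M * (1 + x) := by
  have hM0 : 0 ≤ M := (abs_nonneg _).trans (hM σ hσ).1
  have hn : 0 ≤ (n : ℝ) := n.cast_nonneg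
  have hspace : 2 * n * deriv lineCutoff ρ + 4 * ρ * deriv (deriv lineCutoff) ρ -
      2 * x * deriv lineCutoff ρ ≤ (2 * n + 4 + 2 * x) * M := by
    have h1 := abs_le.mp (hM ρ hρ).1
    have h2 := (le_abs_self _).trans (hM ρ hρ).2
    nlinarith [mul_le_mul_of_nonneg_left h1.2 hn, mul_le_mul_of_nonneg_left h1.1 hx,
      mul_le_mul_of_nonneg_left h2 hρ.1, mul_le_mul_of_nonneg_right hρ.2 hM0]
  have htime : -deriv lineCutoff σ * lineCutoff ρ ≤ M := by
    calc -deriv lineCutoff σ * lineCutoff ρ ≤ M * lineCutoff ρ :=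
          mul_le_mul_of_nonneg_right ((neg_le_abs _).trans (hM σ hσ).1) (lineCutoff_nonneg ρ)
      _ ≤ M := mul_le_of_le_one_right hM0 (lineCutoff_le_one ρ)
  have hspace_cut := (mul_le_mul_of_nonneg_left hspace (lineCutoff_nonneg σ)).trans
    (mul_le_of_le_one_left (by positivity) (lineCutoff_le_one σ))
  nlinarith [mul_nonneg (mul_nonneg hn hM0) hx, mul_nonneg hM0 hx]

lemma deriv_add_heatLap_truncatedHeatKernel_le (hM : ∀ q ∈ Icc (0 : ℝ) 1,
      |deriv lineCutoff q| ≤ M ∧ |deriv (deriv lineCutoff) q| ≤ M)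
    (hr : 0 < r) (ht : t₀ < t) (hs : s ∈ Icc (t₀ - r ^ 2) t₀) {y : EuclideanSpace ℝ (Fin n)}
    (hy : y ∈ closedBall x₀ r) :
    deriv (fun s => truncatedHeatKernel x₀ t₀ t r s y) s +
        heatLap (truncatedHeatKernel x₀ t₀ t r s) y ≤
      (2 * n + 5) * M * (2 * n + 4) ^ (n / 2 + 1 : ℝ) * 2 ^ (n / 2 : ℝ) / r ^ (n + 2) := by
  have hst : s < t := hs.2.trans_lt ht
  have hM0 : 0 ≤ M := (abs_nonneg _).trans (hM 0 (by simp)).1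
  rw [deriv_add_heatLap_truncatedHeatKernel hst]
  set q := ‖y - x₀‖ ^ 2
  have hq : 0 ≤ q := by positivity
  have hqr : q ≤ r ^ 2 := pow_le_pow_left₀ (norm_nonneg _) (mem_closedBall_iff_norm.mp hy) 2
  -- Where both cutoffs are locally `1`, the kernel solves the backward heat equation exactly.
  by_cases hnear : q / r ^ 2 < 1 / 2 ∧ (t₀ - s) / r ^ 2 < 1 / 2
  · rw [deriv_lineCutoff_of_lt_half hnear.1, deriv_deriv_lineCutoff_of_lt_half hnear.1,
      deriv_lineCutoff_of_lt_half hnear.2]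
    simp only [mul_zero, add_zero, sub_zero, zero_mul, zero_div]
    positivity
  have hfar : r ^ 2 / 2 ≤ t - s + q := by
    rw [div_lt_iff₀ (by positivity), div_lt_iff₀ (by positivity), not_and_or, not_lt, not_lt]
      at hnear
    rcases hnear with hnear | hnear <;> linarith
  have hσ : (t₀ - s) / r ^ 2 ∈ Icc 0 1 :=
    ⟨div_nonneg (by linarith [hs.2]) (by positivity), div_le_one_of_le₀ (by linarith [hs.1])
      (by positivity)⟩
  have hρ : q / r ^ 2 ∈ Icc 0 1 := ⟨by positivity, div_le_one_of_le₀ hqr (by positivity)⟩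
  have hτ : 0 < t - s := sub_pos.mpr hst
  calc _ ≤ (2 * n + 5) * M * (1 + q / (t - s)) / r ^ 2 * heatKernel n (t - s) q := by
        gcongr
        · exact (heatKernel_pos hτ q).le
        · exact cutoff_defect_le n hM hσ hρ (by positivity)
    _ = (2 * n + 5) * M / r ^ 2 * ((1 + q / (t - s)) * heatKernel n (t - s) q) := by ring
    _ ≤ (2 * n + 5) * M / r ^ 2 *
          ((2 * n + 4) ^ (n / 2 + 1 : ℝ) * 2 ^ (n / 2 : ℝ) / r ^ n) := by
        gcongr _ * ?_
        exact one_add_div_mul_heatKernel_le_div_pow hτ hq hr hfar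
    _ = (2 * n + 5) * M * (2 * n + 4) ^ (n / 2 + 1 : ℝ) * 2 ^ (n / 2 : ℝ) / r ^ (n + 2) := by
        rw [pow_add]
        field_simp

end TruncatedHeatKernel

section MeanValue

/-- The backward parabolic cylinder `Q_r(t, x) = [t - r², t] × B̄(x, r)` with top centre
`z = (t, x)`. -/
def parabolicCylinder {X : Type*} [PseudoMetricSpace X] (z : ℝ × X) (r : ℝ) : Set (ℝ × X) :=
  Icc (z.1 - r ^ 2) z.1 ×ˢ closedBall z.2 r

lemma exists_le_div_mul_setIntegral_parabolicCylinder (n : ℕ) : ∃ K : ℝ, 0 ≤ K ∧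
    ∀ (f : ℝ → EuclideanSpace ℝ (Fin n) → ℝ) (T : Set ℝ), IsOpen T →
      IsNonnegHeatSubsolution f T → ∀ (t₀ : ℝ) (x₀ : EuclideanSpace ℝ (Fin n)) (r : ℝ), 0 < r →
        Icc (t₀ - r ^ 2) t₀ ⊆ T →
          f t₀ x₀ ≤ K / r ^ (n + 2) * ∫ z in parabolicCylinder (t₀, x₀) r, uncurry f z := by
  obtain ⟨M, hM⟩ := exists_abs_deriv_lineCutoff_le
  have hM0 : 0 ≤ M := (abs_nonneg _).trans (hM 0 (by simp)).1
  refine ⟨(2 * n + 5) * M * (2 * n + 4) ^ (n / 2 + 1 : ℝ) * 2 ^ (n / 2 : ℝ), by positivity,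
    fun f T hT hf t₀ x₀ r hr hrT => ?_⟩
  set P := closedBall x₀ r
  have hP : IsCompact P := isCompact_closedBall x₀ r
  have ht₀ : t₀ - r ^ 2 ≤ t₀ := by linarith [sq_nonneg r]
  have hcont : Continuous (f t₀) :=
    (contDiff_slice hf.contDiffOn (hrT (right_mem_Icc.mpr ht₀))).continuous
  set u : EuclideanSpace ℝ (Fin n) → ℝ := fun y => lineCutoff (‖y - x₀‖ ^ 2 / r ^ 2) * f t₀ y
  have hu : Continuous u :=
    ((contDiff_lineCutoff (k := 0)).continuous.comp (by fun_prop)).mul hcont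
  have hu_zero : ∀ y ∉ P, u y = 0 := fun y hy => by
    simp only [u, lineCutoff_sq_div_sq_of_notMem hr hy, zero_mul]
  have hu_self : u x₀ = f t₀ x₀ := by
    simp only [u, sub_self, norm_zero, zero_pow two_ne_zero, zero_div,
      lineCutoff_of_le_half one_half_pos.le, one_mul]
  have hlim := tendsto_integral_heatKernel_mul
    (hu.integrable_of_hasCompactSupport (HasCompactSupport.intro hP hu_zero)) hu.continuousAt
    (x := x₀)
  rw [← hu_self]
  refine le_of_tendsto hlim ?_
  filter_upwards [self_mem_nhdsWithin] with ε hε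
  have ht : t₀ < t₀ + ε := lt_add_of_pos_right t₀ hε
  have hbound := (hf.mono inter_subset_left).setIntegral_mul_le (hT.inter isOpen_Iio)
    (contDiffOn_truncatedHeatKernel.mono (prod_mono inter_subset_right Subset.rfl)) ht₀
    (subset_inter hrT fun s hs => hs.2.trans_lt ht)
    (fun s hs y => truncatedHeatKernel_nonneg (hs.2.trans_lt ht) y) hP
    (fun s _ y hy => truncatedHeatKernel_of_notMem hr hy) (truncatedHeatKernel_sub_sq hr.ne')
    fun s hs y hy => deriv_add_heatLap_truncatedHeatKernel_le hM hr ht hs hy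
  refine le_trans (le_of_eq ?_) hbound
  rw [setIntegral_eq_integral_of_forall_compl_eq_zero fun y hy => by
    rw [truncatedHeatKernel_of_notMem hr hy, mul_zero]]
  refine integral_congr_ae (Eventually.of_forall fun y => ?_)
  simp only [truncatedHeatKernel_self, add_sub_cancel_left, u]
  ring

end MeanValue

section ParabolicCylinder

variable {X : Type*} [PseudoMetricSpace X] {c z w : ℝ × X} {R : ℝ}

lemma isCompact_parabolicCylinder [ProperSpace X] (c : ℝ × X) (R : ℝ) :
    IsCompact (parabolicCylinder c R) :=
  isCompact_Icc.prod (isCompact_closedBall _ _)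

lemma self_mem_parabolicCylinder (hR : 0 ≤ R) : c ∈ parabolicCylinder c R :=
  ⟨right_mem_Icc.mpr (by linarith [sq_nonneg R]), mem_closedBall_self hR⟩

/-- The parabolic distance from a point `z` of the cylinder `Q_R(c)` to the lateral and bottom
parts of its boundary, i.e. the largest `d` such that `Q_d(z) ⊆ Q_R(c)` follows from the triangle
inequality. -/
noncomputable def parabolicDepth (c : ℝ × X) (R : ℝ) (z : ℝ × X) : ℝ :=
  min (R - dist z.2 c.2) √(z.1 - (c.1 - R ^ 2))

lemma continuous_parabolicDepth (c : ℝ × X) (R : ℝ) : Continuous (parabolicDepth c R) := by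
  unfold parabolicDepth
  fun_prop

lemma parabolicDepth_self (hR : 0 ≤ R) : parabolicDepth c R c = R := by
  rw [parabolicDepth, dist_self, sub_zero, sub_sub_cancel, Real.sqrt_sq hR, min_self]

lemma parabolicDepth_nonneg (hz : z ∈ parabolicCylinder c R) : 0 ≤ parabolicDepth c R z :=
  le_min (sub_nonneg.mpr hz.2) (Real.sqrt_nonneg _)

lemma dist_add_parabolicDepth_le (c : ℝ × X) (R : ℝ) (z : ℝ × X) :
    dist z.2 c.2 + parabolicDepth c R z ≤ R := by
  have h : parabolicDepth c R z ≤ R - dist z.2 c.2 := min_le_left _ _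
  linarith

lemma parabolicDepth_sq_le (hz : z ∈ parabolicCylinder c R) :
    parabolicDepth c R z ^ 2 ≤ z.1 - (c.1 - R ^ 2) :=
  (Real.le_sqrt (parabolicDepth_nonneg hz) (sub_nonneg.mpr hz.1.1)).mp (min_le_right _ _)

lemma parabolicCylinder_half_parabolicDepth_subset (hz : z ∈ parabolicCylinder c R) :
    parabolicCylinder z (parabolicDepth c R z / 2) ⊆ parabolicCylinder c R := by
  rintro w ⟨⟨hwl, hwu⟩, hwx⟩
  have hsq := parabolicDepth_sq_le hz
  have hdist := dist_add_parabolicDepth_le c R z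
  have hdepth := parabolicDepth_nonneg hz
  refine ⟨⟨by nlinarith, hwu.trans hz.1.2⟩, ?_⟩
  rw [mem_closedBall] at hwx ⊢
  linarith [dist_triangle w.2 z.2 c.2]

lemma half_parabolicDepth_le (hz : z ∈ parabolicCylinder c R)
    (hw : w ∈ parabolicCylinder z (parabolicDepth c R z / 2)) :
    parabolicDepth c R z / 2 ≤ parabolicDepth c R w := by
  have hsq := parabolicDepth_sq_le hz
  have hdist := dist_add_parabolicDepth_le c R z
  have hwx : dist w.2 z.2 ≤ parabolicDepth c R z / 2 := hw.2
  refine le_min (by linarith [dist_triangle w.2 z.2 c.2]) (Real.le_sqrt_of_sq_le ?_)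
  nlinarith [hw.1.1, sq_nonneg (parabolicDepth c R z)]

end ParabolicCylinder

section SmallExponent

lemma setIntegral_le_rpow_mul_setIntegral_rpow {α : Type*} [MeasurableSpace α] {μ : Measure α}
    {S : Set α} {g : α → ℝ} {G p : ℝ} (hS : MeasurableSet S) (hp : p ≤ 1)
    (hg : IntegrableOn g S μ) (hgp : IntegrableOn (fun z => g z ^ p) S μ)
    (hg0 : ∀ z ∈ S, 0 ≤ g z) (hgG : ∀ z ∈ S, g z ≤ G) :
    ∫ z in S, g z ∂μ ≤ G ^ (1 - p) * ∫ z in S, g z ^ p ∂μ := by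
  rw [← integral_const_mul]
  refine setIntegral_mono_on hg (hgp.const_mul _) hS fun z hz => ?_
  have h0 := hg0 z hz
  calc g z = g z ^ (1 - p) * g z ^ p := by
        rw [← Real.rpow_add' h0 (by norm_num), sub_add_cancel, Real.rpow_one]
    _ ≤ G ^ (1 - p) * g z ^ p := by
        gcongr ?_ * _
        exact Real.rpow_le_rpow h0 (hgG z hz) (sub_nonneg.mpr hp)

lemma mul_rpow_rpow_le_of_le {p k K A G d : ℝ} (hp : 0 < p) (hG : 0 < G) (hd : 0 < d)
    (h : G ≤ K / (d / 2) ^ k * ((2 ^ (k / p) * G) ^ (1 - p) * A)) :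
    (G * d ^ (k / p)) ^ p ≤ 2 ^ (k / p) * K * A := by
  have hsplit : G = G ^ p * G ^ (1 - p) := by
    rw [← Real.rpow_add hG, add_sub_cancel, Real.rpow_one]
  have hdk : (d ^ (k / p)) ^ p = d ^ k := by
    rw [← Real.rpow_mul hd.le, div_mul_cancel₀ k hp.ne']
  have htwo : (2 : ℝ) ^ k * (2 ^ (k / p)) ^ (1 - p) = 2 ^ (k / p) := by
    rw [← Real.rpow_mul zero_le_two, ← Real.rpow_add two_pos]
    congr 1
    field_simp
    ring
  rw [Real.mul_rpow hG.le (by positivity), hdk]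
  refine le_of_mul_le_mul_right ?_ (Real.rpow_pos_of_pos hG (1 - p))
  calc G ^ p * d ^ k * G ^ (1 - p) = G * d ^ k := by
        rw [mul_right_comm, ← hsplit]
    _ ≤ K / (d / 2) ^ k * ((2 ^ (k / p) * G) ^ (1 - p) * A) * d ^ k := by gcongr
    _ = 2 ^ (k / p) * K * A * G ^ (1 - p) := by
        rw [Real.div_rpow hd.le zero_le_two, Real.mul_rpow (by positivity) hG.le]
        nth_rw 2 [← htwo]
        field_simp

variable {X : Type*} [MetricSpace X] [ProperSpace X] [MeasurableSpace X] [BorelSpace X]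
  {μ : Measure (ℝ × X)} [IsFiniteMeasureOnCompacts μ] {g : ℝ × X → ℝ} {c : ℝ × X} {p k K R : ℝ}

lemma mul_parabolicDepth_rpow_rpow_le_of_isMaxOn (hp0 : 0 < p) (hp1 : p ≤ 1) (hk : 0 < k)
    (hK : 0 ≤ K) (hg : ContinuousOn g (parabolicCylinder c R))
    (hg0 : ∀ z ∈ parabolicCylinder c R, 0 ≤ g z)
    (hmean : ∀ z ∈ parabolicCylinder c R, ∀ r > 0, parabolicCylinder z r ⊆ parabolicCylinder c R →
      g z ≤ K / r ^ k * ∫ w in parabolicCylinder z r, g w ∂μ)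
    {z : ℝ × X} (hz : z ∈ parabolicCylinder c R)
    (hmax : IsMaxOn (fun z => g z * parabolicDepth c R z ^ (k / p)) (parabolicCylinder c R) z)
    (hgz : 0 < g z) (hdz : 0 < parabolicDepth c R z) :
    (g z * parabolicDepth c R z ^ (k / p)) ^ p ≤
      2 ^ (k / p) * K * ∫ w in parabolicCylinder c R, g w ^ p ∂μ := by
  set d := parabolicDepth c R z
  set Q := parabolicCylinder z (d / 2)
  have hR : IsCompact (parabolicCylinder c R) := isCompact_parabolicCylinder c R
  have hQ : IsCompact Q := isCompact_parabolicCylinder z (d / 2)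
  have hQR : Q ⊆ parabolicCylinder c R := parabolicCylinder_half_parabolicDepth_subset hz
  have hgp : ContinuousOn (fun w => g w ^ p) (parabolicCylinder c R) :=
    hg.rpow_const fun _ _ => Or.inr hp0.le
  have hbound : ∀ w ∈ Q, g w ≤ 2 ^ (k / p) * g z := fun w hw => by
    refine le_of_mul_le_mul_right ?_ (Real.rpow_pos_of_pos (half_pos hdz) (k / p))
    calc g w * (d / 2) ^ (k / p) ≤ g w * parabolicDepth c R w ^ (k / p) :=
          mul_le_mul_of_nonneg_left (Real.rpow_le_rpow (half_pos hdz).le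
            (half_parabolicDepth_le hz hw) (by positivity)) (hg0 w (hQR hw))
      _ ≤ g z * d ^ (k / p) := hmax (hQR hw)
      _ = 2 ^ (k / p) * g z * (d / 2) ^ (k / p) := by
          rw [Real.div_rpow hdz.le zero_le_two]
          field_simp
  refine mul_rpow_rpow_le_of_le hp0 hgz hdz ?_
  calc g z ≤ K / (d / 2) ^ k * ∫ w in Q, g w ∂μ := hmean z hz (d / 2) (half_pos hdz) hQR
    _ ≤ K / (d / 2) ^ k * ((2 ^ (k / p) * g z) ^ (1 - p) * ∫ w in Q, g w ^ p ∂μ) := by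
        gcongr
        exact setIntegral_le_rpow_mul_setIntegral_rpow hQ.measurableSet hp1
          ((hg.mono hQR).integrableOn_compact hQ) ((hgp.mono hQR).integrableOn_compact hQ)
          (fun w hw => hg0 w (hQR hw)) hbound
    _ ≤ K / (d / 2) ^ k *
          ((2 ^ (k / p) * g z) ^ (1 - p) * ∫ w in parabolicCylinder c R, g w ^ p ∂μ) := by
        gcongr _ * (_ * ?_)
        exact setIntegral_mono_set (hgp.integrableOn_compact hR)
          (ae_restrict_of_forall_mem hR.measurableSet fun w hw =>
            Real.rpow_nonneg (hg0 w hw) p)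
          hQR.eventuallyLE

lemma mul_rpow_le_of_mean_value (hp0 : 0 < p) (hp1 : p ≤ 1) (hk : 0 < k) (hK : 0 ≤ K)
    (hR : 0 ≤ R) (hg : ContinuousOn g (parabolicCylinder c R))
    (hg0 : ∀ z ∈ parabolicCylinder c R, 0 ≤ g z)
    (hmean : ∀ z ∈ parabolicCylinder c R, ∀ r > 0, parabolicCylinder z r ⊆ parabolicCylinder c R →
      g z ≤ K / r ^ k * ∫ w in parabolicCylinder z r, g w ∂μ) :
    g c * R ^ (k / p) ≤
      (2 ^ (k / p) * K * ∫ z in parabolicCylinder c R, g z ^ p ∂μ) ^ (1 / p) := by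
  have hcompact := isCompact_parabolicCylinder c R
  have hc : c ∈ parabolicCylinder c R := self_mem_parabolicCylinder hR
  have hβ : 0 ≤ k / p := by positivity
  have hcont : ContinuousOn (fun w => g w * parabolicDepth c R w ^ (k / p))
      (parabolicCylinder c R) :=
    hg.mul ((continuous_parabolicDepth c R).continuousOn.rpow_const fun _ _ => Or.inr hβ)
  obtain ⟨z, hz, hmax⟩ := hcompact.exists_isMaxOn ⟨c, hc⟩ hcont
  have hA : 0 ≤ ∫ z in parabolicCylinder c R, g z ^ p ∂μ :=
    setIntegral_nonneg hcompact.measurableSet fun w hw => Real.rpow_nonneg (hg0 w hw) p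
  have hcz : g c * R ^ (k / p) ≤ g z * parabolicDepth c R z ^ (k / p) := by
    simpa only [parabolicDepth_self hR] using isMaxOn_iff.mp hmax c hc
  refine hcz.trans ?_
  have hgz := hg0 z hz
  have hdz := parabolicDepth_nonneg hz
  rcases hgz.eq_or_lt with hgz0 | hgz_pos
  · rw [← hgz0, zero_mul]
    positivity
  rcases hdz.eq_or_lt with hdz0 | hdz_pos
  · rw [← hdz0, Real.zero_rpow (by positivity), mul_zero]
    positivity
  rw [one_div, Real.le_rpow_inv_iff_of_pos (by positivity) (by positivity) hp0]
  exact mul_parabolicDepth_rpow_rpow_le_of_isMaxOn hp0 hp1 hk hK hg hg0 hmean hz hmax hgz_pos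
    hdz_pos

end SmallExponent

section PointwiseBound

lemma exists_mul_rpow_le_setIntegral_rpow (n : ℕ) {p : ℝ} (hp0 : 0 < p) (hp1 : p ≤ 1) :
    ∃ K : ℝ, 0 ≤ K ∧
      ∀ (f : ℝ → EuclideanSpace ℝ (Fin n) → ℝ) (T : Set ℝ), IsOpen T →
        IsNonnegHeatSubsolution f T → ∀ (t₀ : ℝ) (x₀ : EuclideanSpace ℝ (Fin n)) (r : ℝ), 0 < r →
          Icc (t₀ - r ^ 2) t₀ ⊆ T → f t₀ x₀ * r ^ ((n + 2) / p) ≤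
            K * (∫ z in parabolicCylinder (t₀, x₀) r, uncurry f z ^ p) ^ (1 / p) := by
  obtain ⟨K, hK, hmean⟩ := exists_le_div_mul_setIntegral_parabolicCylinder n
  refine ⟨(2 ^ ((n + 2) / p) * K) ^ (1 / p), by positivity,
    fun f T hT hf t₀ x₀ r hr hrT => ?_⟩
  have hsubset : parabolicCylinder (t₀, x₀) r ⊆ T ×ˢ univ := prod_mono hrT (subset_univ _)
  have hnonneg : ∀ z ∈ parabolicCylinder (t₀, x₀) r, 0 ≤ uncurry f z := fun z hz =>
    hf.nonneg z.1 (hsubset hz).1 z.2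
  rw [← Real.mul_rpow (by positivity) (setIntegral_nonneg
    (isCompact_parabolicCylinder _ _).measurableSet fun z hz => Real.rpow_nonneg (hnonneg z hz) p)]
  refine mul_rpow_le_of_mean_value (g := uncurry f) (c := (t₀, x₀)) hp0 hp1 (by positivity) hK
    hr.le (hf.contDiffOn.continuousOn.mono hsubset) hnonneg fun z _ ρ hρ hρr => ?_
  have hρT : Icc (z.1 - ρ ^ 2) z.1 ⊆ T := fun s hs =>
    (hsubset (hρr (a := (s, z.2)) ⟨hs, mem_closedBall_self hρ.le⟩)).1
  exact_mod_cast hmean f T hT hf z.1 z.2 ρ hρ hρT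

lemma setIntegral_prod_le_of_lintegral_lintegral_le {α β : Type*} [MeasurableSpace α]
    [MeasurableSpace β] {μ : Measure α} {ν : Measure β} [SFinite μ] [SFinite ν] {g : α → β → ℝ}
    {J S : Set α} {P T : Set β} (hJ : MeasurableSet J) (hP : MeasurableSet P) (hJS : J ⊆ S)
    (hPT : P ⊆ T) (hg : IntegrableOn (uncurry g) (J ×ˢ P) (μ.prod ν))
    (hg0 : ∀ z ∈ J ×ˢ P, 0 ≤ uncurry g z) {A : ℝ} (hA : 0 ≤ A)
    (h : ∫⁻ t in S, ∫⁻ x in T, ENNReal.ofReal (g t x) ∂ν ∂μ ≤ ENNReal.ofReal A) :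
    ∫ z in J ×ˢ P, uncurry g z ∂(μ.prod ν) ≤ A := by
  have hmeas : AEMeasurable (fun z => ENNReal.ofReal (uncurry g z))
      ((μ.restrict J).prod (ν.restrict P)) := by
    rw [Measure.prod_restrict]
    exact hg.aemeasurable.ennreal_ofReal
  rw [← ENNReal.ofReal_le_ofReal_iff hA,
    ofReal_integral_eq_lintegral_ofReal hg (ae_restrict_of_forall_mem (hJ.prod hP) hg0),
    ← Measure.prod_restrict, lintegral_prod _ hmeas]
  exact ((lintegral_mono fun t => lintegral_mono_set hPT).trans (lintegral_mono_set hJS)).trans h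

variable {n : ℕ} {p : ℝ} {f : ℝ → EuclideanSpace ℝ (Fin n) → ℝ}

lemma setIntegral_parabolicCylinder_rpow_le (hp : 0 < p)
    (hf : IsNonnegHeatSubsolution f (Ioo 0 1)) {t r A : ℝ} {x : EuclideanSpace ℝ (Fin n)}
    (hr : r < 1) (hrt : Icc (t - r ^ 2) t ⊆ Ioo 0 1) (hA : 0 ≤ A)
    (hLp : (∫⁻ t in Ioc (0 : ℝ) 1, ∫⁻ y in ball (0 : EuclideanSpace ℝ (Fin n)) (‖x‖ + 1),
      ENNReal.ofReal (f t y ^ p)) ^ (1 / p) ≤ ENNReal.ofReal A) :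
    ∫ z in parabolicCylinder (t, x) r, uncurry f z ^ p ≤ A ^ p := by
  have hsubset : parabolicCylinder (t, x) r ⊆ Ioo 0 1 ×ˢ univ := prod_mono hrt (subset_univ _)
  have hcont : ContinuousOn (fun z => uncurry f z ^ p) (parabolicCylinder (t, x) r) :=
    (hf.contDiffOn.continuousOn.mono hsubset).rpow_const fun _ _ => Or.inr hp.le
  refine setIntegral_prod_le_of_lintegral_lintegral_le (g := fun t x => f t x ^ p)
    measurableSet_Icc measurableSet_closedBall (hrt.trans Ioo_subset_Ioc_self)
    (closedBall_subset_ball' (y := 0) (ε₂ := ‖x‖ + 1) (by rw [dist_zero_right]; linarith))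
    (hcont.integrableOn_compact (isCompact_parabolicCylinder (t, x) r))
    (fun z hz => Real.rpow_nonneg (hf.nonneg z.1 (hsubset hz).1 z.2) p) (by positivity) ?_
  rwa [← ENNReal.ofReal_rpow_of_nonneg hA hp.le, ← ENNReal.rpow_inv_le_iff hp, ← one_div]

lemma exists_le_mul_div_rpow (n : ℕ) (hp0 : 0 < p) (hp1 : p ≤ 1) :
    ∃ K : ℝ, 0 ≤ K ∧ ∀ f : ℝ → EuclideanSpace ℝ (Fin n) → ℝ,
      IsNonnegHeatSubsolution f (Ioo 0 1) → ∀ (x : EuclideanSpace ℝ (Fin n)) (A : ℝ), 0 ≤ A →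
        (∫⁻ t in Ioc (0 : ℝ) 1, ∫⁻ y in ball (0 : EuclideanSpace ℝ (Fin n)) (‖x‖ + 1),
          ENNReal.ofReal (f t y ^ p)) ^ (1 / p) ≤ ENNReal.ofReal A →
        ∀ t ∈ Ioo (0 : ℝ) 1, f t x ≤ K * A / t ^ ((n + 2) / (2 * p)) := by
  obtain ⟨K, hK, hmean⟩ := exists_mul_rpow_le_setIntegral_rpow n hp0 hp1
  set a : ℝ := (n + 2) / (2 * p)
  refine ⟨2 ^ a * K, by positivity, fun f hf x A hA hLp t ht => ?_⟩
  have hr0 : 0 < √(t / 2) := Real.sqrt_pos.mpr (half_pos ht.1)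
  have hr1 : √(t / 2) < 1 := by
    rw [Real.sqrt_lt' one_pos]
    linarith [ht.2]
  have hrt : Icc (t - √(t / 2) ^ 2) t ⊆ Ioo 0 1 := by
    rw [Real.sq_sqrt (half_pos ht.1).le, sub_half]
    exact fun s hs => ⟨(half_pos ht.1).trans_le hs.1, hs.2.trans_lt ht.2⟩
  have hr_pow : √(t / 2) ^ ((n + 2) / p) = t ^ a / 2 ^ a := by
    rw [Real.sqrt_eq_rpow, ← Real.rpow_mul (half_pos ht.1).le,
      show 1 / 2 * ((n + 2) / p) = a by simp only [a]; field_simp,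
      Real.div_rpow ht.1.le zero_le_two]
  have hint : 0 ≤ ∫ z in parabolicCylinder (t, x) √(t / 2), uncurry f z ^ p :=
    setIntegral_nonneg (isCompact_parabolicCylinder _ _).measurableSet fun z hz =>
      Real.rpow_nonneg (hf.nonneg z.1 (hrt hz.1) z.2) p
  have hnorm : (∫ z in parabolicCylinder (t, x) √(t / 2), uncurry f z ^ p) ^ (1 / p) ≤ A := by
    rw [one_div, Real.rpow_inv_le_iff_of_pos hint hA hp0]
    exact setIntegral_parabolicCylinder_rpow_le hp0 hf hr1 hrt hA hLp
  have hbound : f t x * (t ^ a / 2 ^ a) ≤ K * A := by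
    rw [← hr_pow]
    exact (hmean f _ isOpen_Ioo hf t x _ hr0 hrt).trans (mul_le_mul_of_nonneg_left hnorm hK)
  rw [le_div_iff₀ (Real.rpow_pos_of_pos ht.1 a), mul_assoc, ← div_le_iff₀' (by positivity),
    mul_div_assoc]
  exact hbound

theorem heat_pointwise_bound_from_Lp_general {C : ℝ} (hp0 : 0 < p) (hp1 : p ≤ 1)
    (hf : IsNonnegHeatSubsolution f (Ioo 0 1))
    (hcont : ContinuousOn (uncurry f) (Ioc 0 1 ×ˢ univ))
    (hLp : ∀ r > (0 : ℝ), (∫⁻ t in Ioc (0 : ℝ) 1, ∫⁻ x in ball (0 : EuclideanSpace ℝ (Fin n)) r,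
      ENNReal.ofReal (f t x ^ p)) ^ (1 / p) ≤ ENNReal.ofReal (Real.exp (C * r))) :
    ∃ C' : ℝ, 0 < C' ∧ ∀ x, ∀ t ∈ Ioc (0 : ℝ) 1,
      f t x ≤ Real.exp (C' * (‖x‖ + 1)) / t ^ ((n + 2) / (2 * p)) := by
  obtain ⟨K, hK, hinterior⟩ := exists_le_mul_div_rpow n hp0 hp1
  refine ⟨K + |C| + 1, by positivity, fun x t ht => ?_⟩
  have hexp : K * Real.exp (C * (‖x‖ + 1)) ≤ Real.exp ((K + |C| + 1) * (‖x‖ + 1)) := by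
    calc K * Real.exp (C * (‖x‖ + 1)) ≤ Real.exp K * Real.exp (C * (‖x‖ + 1)) := by
          gcongr
          linarith [Real.add_one_le_exp K]
      _ ≤ Real.exp ((K + |C| + 1) * (‖x‖ + 1)) := by
          rw [← Real.exp_add, Real.exp_le_exp]
          nlinarith [norm_nonneg x, le_abs_self C, mul_nonneg hK (norm_nonneg x),
            mul_le_mul_of_nonneg_right (le_abs_self C) (norm_nonneg x)]
  have hbound : ∀ s ∈ Ioo (0 : ℝ) 1,
      f s x ≤ Real.exp ((K + |C| + 1) * (‖x‖ + 1)) / s ^ ((n + 2) / (2 * p)) := fun s hs =>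
    (hinterior f hf x _ (Real.exp_pos _).le (hLp _ (by positivity)) s hs).trans
      (div_le_div_of_nonneg_right hexp (Real.rpow_nonneg hs.1.le _))
  have hclosure : t ∈ closure (Ioo (0 : ℝ) 1) := by
    rw [closure_Ioo zero_ne_one]
    exact Ioc_subset_Icc_self ht
  have hslice : ContinuousOn (fun s => f s x) (Ioc 0 1) :=
    hcont.comp (f := fun s => (s, x)) (by fun_prop) fun s hs => ⟨hs, mem_univ x⟩
  refine ContinuousWithinAt.closure_le hclosure ((hslice t ht).mono Ioo_subset_Ioc_self) ?_ hbound
  exact (continuousAt_const.div (continuousAt_id.rpow_const (Or.inl ht.1.ne'))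
    (Real.rpow_pos_of_pos ht.1 _).ne').continuousWithinAt

end PointwiseBound

/-- **Pointwise bound from an `Lᵖ` growth bound (Euclidean case).** For `0 < p ≤ 1`
there is `a > 0` depending only on `n` and `p` such that every nonnegative smooth
subsolution of the heat equation on `ℝⁿ × (0,1]` with
`‖f‖_{Lᵖ(B(0,r)×[0,1])} ≤ e^(C r)` for all `r > 0` satisfies
`f(x,t) ≤ e^(C'(|x|+1)) / tᵃ` for some constant `C' > 0`. -/
theorem heat_pointwise_bound_from_Lp (n : ℕ) (hn : 1 ≤ n) (p : ℝ) (hp0 : 0 < p) (hp1 : p ≤ 1) :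
    ∃ a : ℝ, 0 < a ∧
      ∀ (C : ℝ), 0 < C →
      ∀ f : ℝ → EuclideanSpace ℝ (Fin n) → ℝ,
        ContDiffOn ℝ (⊤ : ℕ∞)
          (fun q : ℝ × EuclideanSpace ℝ (Fin n) => f q.1 q.2) (Set.Ioc (0:ℝ) 1 ×ˢ Set.univ) →
        (∀ t ∈ Set.Ioc (0:ℝ) 1, ∀ x, 0 ≤ f t x) →
        (∀ t ∈ Set.Ioc (0:ℝ) 1, ∀ x, deriv (fun s => f s x) t ≤ heatLap (f t) x) →
        (∀ r > (0:ℝ),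
          (∫⁻ t in Set.Ioc (0:ℝ) 1, ∫⁻ x in ball (0 : EuclideanSpace ℝ (Fin n)) r,
            ENNReal.ofReal ((f t x) ^ p)) ^ (1 / p)
          ≤ ENNReal.ofReal (Real.exp (C * r))) →
        ∃ C' : ℝ, 0 < C' ∧ ∀ (x : EuclideanSpace ℝ (Fin n)), ∀ t ∈ Set.Ioc (0:ℝ) 1,
          f t x ≤ Real.exp (C' * (‖x‖ + 1)) / t ^ a := by
  refine ⟨(n + 2) / (2 * p), by positivity, fun C _ f hsmooth hnonneg hsub hLp => ?_⟩
  have hf : IsNonnegHeatSubsolution f (Ioc 0 1) :=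
    ⟨contDiffOn_infty.mp hsmooth 2, hnonneg, hsub⟩
  exact heat_pointwise_bound_from_Lp_general hp0 hp1 (hf.mono Ioo_subset_Ioc_self)
    hsmooth.continuousOn hLp
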